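/- Let E₁ and E₂ be metrizable topological spaces with their Borel σ-algebras, let Ψ : E₁ × E₂ → ℝ be bounded and jointly Borel measurable, and let Φ₁, Φ₂ : E₁ × E₂ → ℝ be jointly Borel measurable. Let X¹ and X² be independent càdlàg processes with values in E₁ and E₂ such that for each x₂ ∈ E₂ the process t ↦ Ψ(X¹_t, x₂) − ∫₀ᵗ Φ₁(X¹_s, x₂) ds is a martingale with respect to the filtration generated by X¹ (with the integrability conditions E[|Ψ(X¹_t,x₂)|] < ∞ and ∫₀ᵗ E[|Φ₁(X¹_s,x₂)|] ds < ∞ for all t), and symmetrically for X² and Φ₂. Assume ∫₀ᵀ∫₀ᵀ E[|Φᵢ(X¹_s, X²_t)|] ds dt < ∞ for all T ≥ 0, i = 1,2. If Φ₁(x₁, x₂) ≥ Φ₂(x₁, x₂) for all x₁ ∈ E₁ and x₂ ∈ E₂, then E[Ψ(X¹_T, X²_0)] ≥ E[Ψ(X¹_0, X²_T)] for every T ∈ [0,∞). -/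

import Mathlib

open MeasureTheory ProbabilityTheory Filter Set
open scoped NNReal ENNReal

/-!
Let `F (s, t) = E[Ψ (X₁ s, X₂ t)]`. By independence the two martingale problems give
`∂F/∂s = E[Φ₁ (X₁ s, X₂ t)]` and `∂F/∂t = E[Φ₂ (X₁ s, X₂ t)]` in integrated form. Evaluating
`∫₀ᵀ F (T - t, t) dt` from either coordinate axis yields
`∫₀ᵀ (F (t, 0) - F (0, t)) dt = ∫_{s, t ≥ 0, s + t ≤ T} E[(Φ₁ - Φ₂) (X₁ s, X₂ t)] ds dt`.
The right-hand side is nondecreasing in `T` and the integrand on the left is continuous, so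
`F (0, T) ≤ F (T, 0)` for every `T`.
-/

section Triangle

/-- The triangle of pairs of nonnegative times with sum at most `T`. -/
def timeTriangle (T : ℝ) : Set (ℝ × ℝ) := {p | 0 ≤ p.1 ∧ 0 ≤ p.2 ∧ p.1 + p.2 ≤ T}

lemma measurableSet_timeTriangle (T : ℝ) : MeasurableSet (timeTriangle T) :=
  (measurableSet_le measurable_const measurable_fst).inter
    ((measurableSet_le measurable_const measurable_snd).inter
      (measurableSet_le (measurable_fst.add measurable_snd) measurable_const))

lemma timeTriangle_subset_Icc_prod_Icc (T : ℝ) : timeTriangle T ⊆ Icc 0 T ×ˢ Icc 0 T := by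
  rintro ⟨s, t⟩ ⟨hs, ht, hst⟩
  exact ⟨⟨hs, by dsimp at *; linarith⟩, ⟨ht, by dsimp at *; linarith⟩⟩

lemma timeTriangle_mono : Monotone timeTriangle :=
  fun _ _ h _ ⟨hs, ht, hst⟩ => ⟨hs, ht, hst.trans h⟩

lemma swap_preimage_timeTriangle (T : ℝ) : Prod.swap ⁻¹' timeTriangle T = timeTriangle T := by
  ext ⟨s, t⟩
  simp only [timeTriangle, mem_preimage, Prod.swap_prod_mk, mem_ofPred_eq, add_comm t s]
  tauto

variable {G : Type*} [NormedAddCommGroup G] [NormedSpace ℝ G]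

lemma setIntegral_timeTriangle_swap (f : ℝ × ℝ → G) (T : ℝ) :
    ∫ p in timeTriangle T, f p.swap = ∫ p in timeTriangle T, f p := by
  have h := (Measure.measurePreserving_swap (μ := (volume : Measure ℝ)) (ν := (volume : Measure ℝ))
    ).setIntegral_preimage_emb MeasurableEquiv.prodComm.measurableEmbedding f (timeTriangle T)
  rwa [swap_preimage_timeTriangle] at h

lemma integral_indicator_timeTriangle (f : ℝ × ℝ → G) (T t : ℝ) :
    ∫ s, (timeTriangle T).indicator f (s, t) =
      (Icc 0 T).indicator (fun t => ∫ s in (0 : ℝ)..T - t, f (s, t)) t := by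
  by_cases ht : t ∈ Icc 0 T
  · rw [indicator_of_mem ht, intervalIntegral.integral_of_le (sub_nonneg.2 ht.2),
      ← integral_Icc_eq_integral_Ioc, ← integral_indicator measurableSet_Icc]
    congr 1 with s
    have hmem : (s, t) ∈ timeTriangle T ↔ s ∈ Icc 0 (T - t) := by
      simp [timeTriangle, ht.1, le_sub_iff_add_le]
    by_cases hs : s ∈ Icc 0 (T - t)
    · rw [indicator_of_mem hs, indicator_of_mem (hmem.2 hs)]
    · rw [indicator_of_notMem hs, indicator_of_notMem (mt hmem.1 hs)]
  · have hslice (s : ℝ) : (s, t) ∉ timeTriangle T :=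
      fun h => ht (timeTriangle_subset_Icc_prod_Icc T h).2
    simp only [indicator_of_notMem ht, indicator_of_notMem (hslice _), integral_zero]

variable {f : ℝ × ℝ → G} {T : ℝ}

lemma intervalIntegrable_timeTriangle_slice (hT : 0 ≤ T) (hf : IntegrableOn f (timeTriangle T)) :
    IntervalIntegrable (fun t => ∫ s in (0 : ℝ)..T - t, f (s, t)) volume 0 T := by
  have h := ((integrable_indicator_iff (measurableSet_timeTriangle T)).2 hf).integral_prod_right
  simp only [integral_indicator_timeTriangle] at h
  rwa [intervalIntegrable_iff_integrableOn_Icc_of_le hT,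
    ← integrable_indicator_iff measurableSet_Icc]

lemma setIntegral_timeTriangle (hT : 0 ≤ T) (hf : IntegrableOn f (timeTriangle T)) :
    ∫ p in timeTriangle T, f p = ∫ t in (0 : ℝ)..T, ∫ s in (0 : ℝ)..T - t, f (s, t) := by
  rw [← integral_indicator (measurableSet_timeTriangle T), Measure.volume_eq_prod,
    integral_prod_symm _ ((integrable_indicator_iff (measurableSet_timeTriangle T)).2 hf)]
  simp only [integral_indicator_timeTriangle]
  rw [integral_indicator measurableSet_Icc, integral_Icc_eq_integral_Ioc,
    intervalIntegral.integral_of_le hT]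

lemma integral_antidiagonal_eq {F : ℝ × ℝ → G} (hT : 0 ≤ T)
    (hF : IntervalIntegrable (fun t => F (0, t)) volume 0 T) (hf : IntegrableOn f (timeTriangle T))
    (hFf : ∀ᵐ t ∂volume.restrict (Icc 0 T),
      F (T - t, t) = F (0, t) + ∫ s in (0 : ℝ)..T - t, f (s, t)) :
    ∫ t in (0 : ℝ)..T, F (T - t, t) =
      (∫ t in (0 : ℝ)..T, F (0, t)) + ∫ p in timeTriangle T, f p := by
  rw [setIntegral_timeTriangle hT hf,
    ← intervalIntegral.integral_add hF (intervalIntegrable_timeTriangle_slice hT hf)]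
  simp only [intervalIntegral.integral_of_le hT, ← integral_Icc_eq_integral_Ioc]
  exact integral_congr_ae hFf

theorem integral_add_setIntegral_timeTriangle_comm {F f₁ f₂ : ℝ × ℝ → G} (hT : 0 ≤ T)
    (hF₁ : IntervalIntegrable (fun t => F (0, t)) volume 0 T)
    (hF₂ : IntervalIntegrable (fun s => F (s, 0)) volume 0 T)
    (hf₁ : IntegrableOn f₁ (timeTriangle T)) (hf₂ : IntegrableOn f₂ (timeTriangle T))
    (hFf₁ : ∀ᵐ t ∂volume.restrict (Icc 0 T),
      F (T - t, t) = F (0, t) + ∫ s in (0 : ℝ)..T - t, f₁ (s, t))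
    (hFf₂ : ∀ᵐ s ∂volume.restrict (Icc 0 T),
      F (s, T - s) = F (s, 0) + ∫ t in (0 : ℝ)..T - s, f₂ (s, t)) :
    (∫ t in (0 : ℝ)..T, F (0, t)) + ∫ p in timeTriangle T, f₁ p =
      (∫ s in (0 : ℝ)..T, F (s, 0)) + ∫ p in timeTriangle T, f₂ p := by
  have hf₂' : IntegrableOn (f₂ ∘ Prod.swap) (timeTriangle T) := by
    rw [← swap_preimage_timeTriangle]
    exact (Measure.measurePreserving_swap.integrableOn_comp_preimage
      MeasurableEquiv.prodComm.measurableEmbedding).2 hf₂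
  calc (∫ t in (0 : ℝ)..T, F (0, t)) + ∫ p in timeTriangle T, f₁ p
      = ∫ t in (0 : ℝ)..T, F (T - t, t) := (integral_antidiagonal_eq hT hF₁ hf₁ hFf₁).symm
    _ = ∫ s in (0 : ℝ)..T, F (s, T - s) := by
        simpa using intervalIntegral.integral_comp_sub_left (a := 0) (b := T)
          (fun s => F (s, T - s)) T
    _ = (∫ s in (0 : ℝ)..T, F (s, 0)) + ∫ p in timeTriangle T, f₂ p.swap :=
        integral_antidiagonal_eq (F := F ∘ Prod.swap) hT hF₂ hf₂' hFf₂
    _ = (∫ s in (0 : ℝ)..T, F (s, 0)) + ∫ p in timeTriangle T, f₂ p := by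
        rw [setIntegral_timeTriangle_swap]

end Triangle

lemma nonneg_of_monotoneOn_integral {g : ℝ → ℝ} {a : ℝ} (hg : ContinuousOn g (Ici a))
    (hmono : MonotoneOn (fun b => ∫ t in a..b, g t) (Ici a)) {b : ℝ} (hb : a ≤ b) : 0 ≤ g b := by
  have hderiv : HasDerivWithinAt (fun u => ∫ t in a..u, g t) (g b) (Ici b) b := by
    have hgb : ContinuousOn g (Ici b) := hg.mono (Ici_subset_Ici.2 hb)
    refine intervalIntegral.integral_hasDerivWithinAt_right (t := Ioi b) ?_ ?_ ?_
    · exact (hg.mono (by rw [uIcc_of_le hb]; exact Icc_subset_Ici_self)).intervalIntegrable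
    · exact (hgb.mono Ioi_subset_Ici_self).stronglyMeasurableAtFilter_nhdsWithin measurableSet_Ioi b
    · exact (hgb b self_mem_Ici).mono Ioi_subset_Ici_self
  rw [← hderiv.derivWithin (uniqueDiffOn_Ici b b self_mem_Ici)]
  exact (hmono.mono (Ici_subset_Ici.2 hb)).derivWithin_nonneg

theorem boundary_le_of_ae_le_timeTriangle {F f₁ f₂ : ℝ × ℝ → ℝ}
    (hF₁ : ContinuousOn (fun t => F (0, t)) (Ici 0))
    (hF₂ : ContinuousOn (fun s => F (s, 0)) (Ici 0))
    (hf₁ : ∀ T, 0 ≤ T → IntegrableOn f₁ (timeTriangle T))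
    (hf₂ : ∀ T, 0 ≤ T → IntegrableOn f₂ (timeTriangle T))
    (hFf₁ : ∀ T, 0 ≤ T → ∀ᵐ t ∂volume.restrict (Icc 0 T),
      F (T - t, t) = F (0, t) + ∫ s in (0 : ℝ)..T - t, f₁ (s, t))
    (hFf₂ : ∀ T, 0 ≤ T → ∀ᵐ s ∂volume.restrict (Icc 0 T),
      F (s, T - s) = F (s, 0) + ∫ t in (0 : ℝ)..T - s, f₂ (s, t))
    (hle : ∀ T, 0 ≤ T → f₂ ≤ᵐ[volume.restrict (timeTriangle T)] f₁) {T : ℝ} (hT : 0 ≤ T) :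
    F (0, T) ≤ F (T, 0) := by
  have hint {g : ℝ → ℝ} (hg : ContinuousOn g (Ici 0)) {S : ℝ} (hS : 0 ≤ S) :
      IntervalIntegrable g volume 0 S :=
    (hg.mono (by rw [uIcc_of_le hS]; exact Icc_subset_Ici_self)).intervalIntegrable
  have hduality {S : ℝ} (hS : 0 ≤ S) : ∫ t in (0 : ℝ)..S, (F (t, 0) - F (0, t)) =
      ∫ p in timeTriangle S, (f₁ p - f₂ p) := by
    rw [intervalIntegral.integral_sub (hint hF₂ hS) (hint hF₁ hS),
      integral_sub (hf₁ S hS) (hf₂ S hS)]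
    linarith [integral_add_setIntegral_timeTriangle_comm hS (hint hF₁ hS) (hint hF₂ hS)
      (hf₁ S hS) (hf₂ S hS) (hFf₁ S hS) (hFf₂ S hS)]
  refine sub_nonneg.1 (nonneg_of_monotoneOn_integral (hF₂.sub hF₁) ?_ hT)
  intro S (hS : 0 ≤ S) S' (hS' : 0 ≤ S') hSS'
  simp only [Pi.sub_apply, hduality hS, hduality hS']
  refine setIntegral_mono_set ((hf₁ S' hS').sub (hf₂ S' hS')) ?_
    (timeTriangle_mono hSS').eventuallyLE
  filter_upwards [hle S' hS'] with p hp using sub_nonneg.2 hp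

section ForwardEquation

variable {α E E₁ E₂ : Type*} [MeasurableSpace α] [MeasurableSpace E] [MeasurableSpace E₁]
  [MeasurableSpace E₂]

section Integrability

variable {G : Type*} [NormedAddCommGroup G] {μ : Measure α} {κ : Kernel α E}

lemma integrable_compProd_of_lintegral_lt_top [SFinite μ] [IsSFiniteKernel κ] {f : α × E → G}
    (hf : StronglyMeasurable f) (hfin : ∫⁻ a, ∫⁻ x, ‖f (a, x)‖ₑ ∂κ a ∂μ < ⊤) :
    Integrable f (μ ⊗ₘ κ) :=
  ⟨hf.aestronglyMeasurable, by
    rwa [hasFiniteIntegral_iff_enorm, Measure.lintegral_compProd hf.enorm]⟩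

lemma ae_integrable_of_lintegral_lt_top {f : E → G} (hf : StronglyMeasurable f)
    (hfin : ∫⁻ a, ∫⁻ x, ‖f x‖ₑ ∂κ a ∂μ < ⊤) : ∀ᵐ a ∂μ, Integrable f (κ a) := by
  filter_upwards [ae_lt_top hf.enorm.lintegral_kernel hfin.ne] with a ha
    using ⟨hf.aestronglyMeasurable, ha⟩

variable [NormedSpace ℝ G]

lemma integrable_integral_of_lintegral_lt_top [SFinite μ] [IsSFiniteKernel κ] {f : E → G}
    (hf : StronglyMeasurable f) (hfin : ∫⁻ a, ∫⁻ x, ‖f x‖ₑ ∂κ a ∂μ < ⊤) :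
    Integrable (fun a => ∫ x, f x ∂κ a) μ :=
  (integrable_compProd_of_lintegral_lt_top (hf.comp_measurable measurable_snd)
    hfin).integral_compProd

lemma integrable_integral_left_of_lintegral_lt_top [SFinite μ] {κ : Kernel α E₁}
    [IsSFiniteKernel κ] {ρ : Measure E₂} [SFinite ρ] {f : E₁ × E₂ → G} (hf : StronglyMeasurable f)
    (hfin : ∫⁻ a, ∫⁻ p, ‖f p‖ₑ ∂(κ a).prod ρ ∂μ < ⊤) :
    Integrable (fun q : α × E₂ => ∫ x, f (x, q.2) ∂κ q.1) (μ.prod ρ) := by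
  have hswap : Measurable fun r : (α × E₂) × E₁ => (r.2, r.1.2) := by fun_prop
  have hinner : Measurable fun q : α × E₂ => ∫⁻ x, ‖f (x, q.2)‖ₑ ∂κ q.1 :=
    Measurable.lintegral_kernel_prod_right' (κ := κ.prodMkRight E₂) (hf.enorm.comp hswap)
  refine (integrable_compProd_of_lintegral_lt_top (κ := κ.prodMkRight E₂)
    (hf.comp_measurable hswap) ?_).integral_compProd
  change ∫⁻ q, ∫⁻ x, ‖f (x, q.2)‖ₑ ∂κ q.1 ∂μ.prod ρ < ⊤
  rw [lintegral_prod _ hinner.aemeasurable]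
  simpa only [lintegral_prod_symm' _ hf.enorm] using hfin

end Integrability

/-- The family of laws `κ t`, `t ≥ 0`, satisfies `d/dt ∫ ψ dκ t = ∫ φ dκ t` in integrated form:
this is what a martingale problem with `φ = A ψ` says about one-dimensional marginals. Kernels are
indexed by `ℝ` to match interval integrals; only times `t ≥ 0` matter. -/
structure SolvesForwardEquation (κ : Kernel ℝ E) (ψ φ : E → ℝ) : Prop where
  lintegral_enorm_lt_top : ∀ t, 0 ≤ t → ∫⁻ s in Icc 0 t, ∫⁻ x, ‖φ x‖ₑ ∂κ s < ⊤
  integral_eq : ∀ t, 0 ≤ t →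
    ∫ x, ψ x ∂κ t = ∫ x, ψ x ∂κ 0 + ∫ s in (0 : ℝ)..t, ∫ x, φ x ∂κ s

namespace SolvesForwardEquation

lemma continuousOn_integral {κ : Kernel ℝ E} [IsSFiniteKernel κ] {ψ φ : E → ℝ}
    (h : SolvesForwardEquation κ ψ φ) (hφ : Measurable φ) :
    ContinuousOn (fun t => ∫ x, ψ x ∂κ t) (Ici 0) := by
  have hint (t : ℝ) (ht : 0 ≤ t) : IntegrableOn (fun s => ∫ x, φ x ∂κ s) (Icc 0 t) :=
    integrable_integral_of_lintegral_lt_top hφ.stronglyMeasurable (h.lintegral_enorm_lt_top t ht)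
  refine ContinuousOn.congr (continuousOn_const.add fun t (ht : 0 ≤ t) => ?_) h.integral_eq
  have hcont := intervalIntegral.continuousOn_primitive_interval (a := 0) (b := t + 1)
    (by rw [uIcc_of_le (by linarith)]; exact hint (t + 1) (by linarith))
  rw [uIcc_of_le (by linarith)] at hcont
  exact (hcont t ⟨ht, by linarith⟩).mono_of_mem_nhdsWithin
    (inter_mem self_mem_nhdsWithin (mem_nhdsWithin_of_mem_nhds (Iic_mem_nhds (by linarith))))

variable {κ : Kernel ℝ E₁} [IsMarkovKernel κ] {ρ : Measure E₂} [IsProbabilityMeasure ρ]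
  {Ψ Φ : E₁ × E₂ → ℝ} {C : ℝ}

lemma continuousOn_integral_prod (hΨ : Measurable Ψ) (hΨC : ∀ p, |Ψ p| ≤ C) (hΦ : Measurable Φ)
    (h : ∀ y, SolvesForwardEquation κ (fun x => Ψ (x, y)) (fun x => Φ (x, y))) :
    ContinuousOn (fun t => ∫ p, Ψ p ∂(κ t).prod ρ) (Ici 0) := by
  have hint (t : ℝ) : Integrable Ψ ((κ t).prod ρ) :=
    .of_bound hΨ.aestronglyMeasurable C (.of_forall hΨC)
  simp only [integral_prod_symm _ (hint _)]
  refine continuousOn_of_dominated (bound := fun _ => C)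
    (fun t _ => (hint t).integral_prod_right.aestronglyMeasurable)
    (fun t _ => .of_forall fun y => ?_) (integrable_const C)
    (.of_forall fun y => (h y).continuousOn_integral (hΦ.comp measurable_prodMk_right))
  simpa using norm_integral_le_of_norm_le_const (μ := κ t) (f := fun x => Ψ (x, y))
    (.of_forall fun x => hΨC (x, y))

lemma integral_prod_eq (hΨ : Measurable Ψ) (hΨC : ∀ p, |Ψ p| ≤ C) (hΦ : Measurable Φ)
    (h : ∀ y, SolvesForwardEquation κ (fun x => Ψ (x, y)) (fun x => Φ (x, y))) {t : ℝ} (ht : 0 ≤ t)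
    (hfin : ∫⁻ s in Icc 0 t, ∫⁻ p, ‖Φ p‖ₑ ∂(κ s).prod ρ < ⊤) :
    ∫ p, Ψ p ∂(κ t).prod ρ =
      ∫ p, Ψ p ∂(κ 0).prod ρ + ∫ s in (0 : ℝ)..t, ∫ p, Φ p ∂(κ s).prod ρ := by
  have hint (s : ℝ) : Integrable Ψ ((κ s).prod ρ) :=
    .of_bound hΨ.aestronglyMeasurable C (.of_forall hΨC)
  have hswap := integrable_integral_left_of_lintegral_lt_top hΦ.stronglyMeasurable hfin
  have hdrift : ∀ᵐ s ∂volume.restrict (Icc 0 t), Integrable Φ ((κ s).prod ρ) :=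
    ae_integrable_of_lintegral_lt_top (κ := κ ×ₖ Kernel.const ℝ ρ) hΦ.stronglyMeasurable
      (by simpa only [Kernel.prod_apply, Kernel.const_apply] using hfin) |>.mono fun s hs => by
        rwa [Kernel.prod_apply] at hs
  simp only [intervalIntegral.integral_of_le ht, ← integral_Icc_eq_integral_Ioc]
  calc ∫ p, Ψ p ∂(κ t).prod ρ
      = ∫ y, (∫ x, Ψ (x, y) ∂κ 0 + ∫ s in Icc 0 t, ∫ x, Φ (x, y) ∂κ s) ∂ρ := by
        simp only [integral_prod_symm _ (hint _), (h _).integral_eq t ht,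
          intervalIntegral.integral_of_le ht, integral_Icc_eq_integral_Ioc]
    _ = ∫ p, Ψ p ∂(κ 0).prod ρ + ∫ s in Icc 0 t, ∫ y, ∫ x, Φ (x, y) ∂κ s ∂ρ := by
        rw [integral_add (hint 0).integral_prod_right hswap.integral_prod_right,
          integral_prod_symm _ (hint 0),
          integral_integral_swap (f := fun s y => ∫ x, Φ (x, y) ∂κ s) hswap]
    _ = ∫ p, Ψ p ∂(κ 0).prod ρ + ∫ s in Icc 0 t, ∫ p, Φ p ∂(κ s).prod ρ := by
        congr 1
        refine integral_congr_ae ?_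
        filter_upwards [hdrift] with s hs using (integral_prod_symm _ hs).symm

end SolvesForwardEquation

variable {κ₁ : Kernel ℝ E₁} {κ₂ : Kernel ℝ E₂} {Ψ Φ Φ₁ Φ₂ : E₁ × E₂ → ℝ} {C T : ℝ}

section Swap

variable [IsSFiniteKernel κ₁] [IsSFiniteKernel κ₂]

lemma integral_parallelComp_swap {G : Type*} [NormedAddCommGroup G] [NormedSpace ℝ G]
    (f : E₁ × E₂ → G) (q : ℝ × ℝ) :
    ∫ p, f p.swap ∂(κ₂ ∥ₖ κ₁) q = ∫ p, f p ∂(κ₁ ∥ₖ κ₂) q.swap := by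
  simp only [Kernel.parallelComp_apply]
  exact integral_prod_swap f

lemma setLIntegral_parallelComp_swap (f : E₁ × E₂ → ℝ≥0∞) (s : Set ℝ) :
    ∫⁻ q in s ×ˢ s, ∫⁻ p, f p.swap ∂(κ₂ ∥ₖ κ₁) q =
      ∫⁻ q in s ×ˢ s, ∫⁻ p, f p ∂(κ₁ ∥ₖ κ₂) q := by
  simp only [Kernel.parallelComp_apply, lintegral_prod_swap, Measure.volume_eq_prod,
    ← Measure.prod_restrict]
  exact lintegral_prod_swap (fun q : ℝ × ℝ => ∫⁻ p, f p ∂(κ₁ q.1).prod (κ₂ q.2))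

end Swap

section Duality

variable [IsMarkovKernel κ₁] [IsMarkovKernel κ₂]

lemma ae_integral_antidiagonal_eq (hΨ : Measurable Ψ) (hΨC : ∀ p, |Ψ p| ≤ C) (hΦ : Measurable Φ)
    (h : ∀ y, SolvesForwardEquation κ₁ (fun x => Ψ (x, y)) (fun x => Φ (x, y)))
    (hfin : ∫⁻ q in Icc 0 T ×ˢ Icc 0 T, ∫⁻ p, ‖Φ p‖ₑ ∂(κ₁ ∥ₖ κ₂) q < ⊤) :
    ∀ᵐ t ∂volume.restrict (Icc 0 T), ∫ p, Ψ p ∂(κ₁ ∥ₖ κ₂) (T - t, t) =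
      ∫ p, Ψ p ∂(κ₁ ∥ₖ κ₂) (0, t) +
        ∫ s in (0 : ℝ)..T - t, ∫ p, Φ p ∂(κ₁ ∥ₖ κ₂) (s, t) := by
  have hm : Measurable fun q => ∫⁻ p, ‖Φ p‖ₑ ∂(κ₁ ∥ₖ κ₂) q := hΦ.enorm.lintegral_kernel
  rw [Measure.volume_eq_prod, ← Measure.prod_restrict, lintegral_prod_symm' _ hm] at hfin
  filter_upwards [ae_lt_top hm.lintegral_prod_left' hfin.ne,
    ae_restrict_mem measurableSet_Icc] with t htfin ht
  simp only [Kernel.parallelComp_apply] at htfin ⊢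
  exact SolvesForwardEquation.integral_prod_eq hΨ hΨC hΦ h (sub_nonneg.2 ht.2)
    ((lintegral_mono_set (Icc_subset_Icc_right (sub_le_self T ht.1))).trans_lt htfin)

theorem integral_parallelComp_le (hΨ : Measurable Ψ) (hΨC : ∀ p, |Ψ p| ≤ C)
    (hΦ₁ : Measurable Φ₁) (hΦ₂ : Measurable Φ₂)
    (h₁ : ∀ y, SolvesForwardEquation κ₁ (fun x => Ψ (x, y)) (fun x => Φ₁ (x, y)))
    (h₂ : ∀ x, SolvesForwardEquation κ₂ (fun y => Ψ (x, y)) (fun y => Φ₂ (x, y)))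
    (hfin₁ : ∀ S, 0 ≤ S → ∫⁻ q in Icc 0 S ×ˢ Icc 0 S, ∫⁻ p, ‖Φ₁ p‖ₑ ∂(κ₁ ∥ₖ κ₂) q < ⊤)
    (hfin₂ : ∀ S, 0 ≤ S → ∫⁻ q in Icc 0 S ×ˢ Icc 0 S, ∫⁻ p, ‖Φ₂ p‖ₑ ∂(κ₁ ∥ₖ κ₂) q < ⊤)
    (hle : Φ₂ ≤ Φ₁) (hT : 0 ≤ T) :
    ∫ p, Ψ p ∂(κ₁ ∥ₖ κ₂) (0, T) ≤ ∫ p, Ψ p ∂(κ₁ ∥ₖ κ₂) (T, 0) := by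
  have hΨ' : Measurable fun p : E₂ × E₁ => Ψ p.swap := hΨ.comp measurable_swap
  have hΦ₂' : Measurable fun p : E₂ × E₁ => Φ₂ p.swap := hΦ₂.comp measurable_swap
  have hint {Φ : E₁ × E₂ → ℝ} (hΦ : Measurable Φ) {S : ℝ}
      (hfin : ∫⁻ q in Icc 0 S ×ˢ Icc 0 S, ∫⁻ p, ‖Φ p‖ₑ ∂(κ₁ ∥ₖ κ₂) q < ⊤) :
      IntegrableOn (fun q => ∫ p, Φ p ∂(κ₁ ∥ₖ κ₂) q) (timeTriangle S) :=
    IntegrableOn.mono_set (integrable_integral_of_lintegral_lt_top hΦ.stronglyMeasurable hfin)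
      (timeTriangle_subset_Icc_prod_Icc S)
  refine boundary_le_of_ae_le_timeTriangle
    (F := fun q => ∫ p, Ψ p ∂(κ₁ ∥ₖ κ₂) q) (f₁ := fun q => ∫ p, Φ₁ p ∂(κ₁ ∥ₖ κ₂) q)
    (f₂ := fun q => ∫ p, Φ₂ p ∂(κ₁ ∥ₖ κ₂) q) ?_ ?_ (fun S hS => hint hΦ₁ (hfin₁ S hS))
    (fun S hS => hint hΦ₂ (hfin₂ S hS))
    (fun S hS => ae_integral_antidiagonal_eq hΨ hΨC hΦ₁ h₁ (hfin₁ S hS))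
    (fun S hS => ?_) (fun S hS => ?_) hT
  · have hcont := SolvesForwardEquation.continuousOn_integral_prod (ρ := κ₁ 0) hΨ'
      (fun _ => hΨC _) hΦ₂' h₂
    simpa only [Kernel.parallelComp_apply, integral_prod_swap] using hcont
  · simpa only [Kernel.parallelComp_apply] using
      SolvesForwardEquation.continuousOn_integral_prod (ρ := κ₂ 0) hΨ hΨC hΦ₁ h₁
  · have hswap := ae_integral_antidiagonal_eq (κ₁ := κ₂) (κ₂ := κ₁) hΨ' (fun _ => hΨC _) hΦ₂' h₂
      ((setLIntegral_parallelComp_swap (fun p => ‖Φ₂ p‖ₑ) (Icc 0 S)).trans_lt (hfin₂ S hS))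
    simpa only [integral_parallelComp_swap, Prod.swap_prod_mk] using hswap
  · refine ae_restrict_of_ae_restrict_of_subset (timeTriangle_subset_Icc_prod_Icc S) ?_
    filter_upwards [ae_integrable_of_lintegral_lt_top hΦ₁.stronglyMeasurable (hfin₁ S hS),
      ae_integrable_of_lintegral_lt_top hΦ₂.stronglyMeasurable (hfin₂ S hS)] with q hq₁ hq₂
      using integral_mono hq₂ hq₁ hle

end Duality

end ForwardEquation

section MarginalLaw

variable {Ω E E₁ E₂ : Type*} [MeasurableSpace Ω] [MeasurableSpace E] [MeasurableSpace E₁]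
  [MeasurableSpace E₂] {P : Measure Ω}

lemma measurable_uncurry_of_rightContinuous [TopologicalSpace E]
    [TopologicalSpace.PseudoMetrizableSpace E] [BorelSpace E] {X : ℝ≥0 → Ω → E}
    (hX : ∀ t, Measurable (X t)) (hrc : ∀ ω t, ContinuousWithinAt (fun s => X s ω) (Ici t) t) :
    Measurable (Function.uncurry X) := by
  refine measurable_of_tendsto_metrizable
    (f := fun (n : ℕ) (p : ℝ≥0 × Ω) => X (⌈p.1 * n⌉₊ / n) p.2) (fun n => ?_)
    (tendsto_pi_nhds.2 fun ⟨t, ω⟩ => ?_)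
  · have hgrid : Measurable fun q : ℕ × Ω => X (q.1 / n) q.2 :=
      measurable_from_prod_countable_right fun k => hX (k / n)
    exact hgrid.comp (f := fun p : ℝ≥0 × Ω => (⌈p.1 * n⌉₊, p.2)) (by fun_prop)
  · refine (hrc ω t).tendsto.comp (tendsto_nhdsWithin_iff.2 ⟨?_, ?_⟩)
    · exact NNReal.tendsto_coe.1
        ((tendsto_nat_ceil_mul_div_atTop t.2).comp tendsto_natCast_atTop_atTop)
    · filter_upwards [eventually_gt_atTop 0] with n hn
      exact (le_div_iff₀ (Nat.cast_pos.2 hn : (0 : ℝ≥0) < n)).2 (Nat.le_ceil _)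

lemma measurable_nnreal_of_rightContinuous [TopologicalSpace E]
    [TopologicalSpace.PseudoMetrizableSpace E] [BorelSpace E] {X : ℝ → Ω → E}
    (hX : ∀ t, 0 ≤ t → Measurable (X t))
    (hrc : ∀ ω t, 0 ≤ t → ContinuousWithinAt (fun s => X s ω) (Ici t) t) :
    Measurable fun p : ℝ≥0 × Ω => X p.1 p.2 :=
  measurable_uncurry_of_rightContinuous (X := fun t : ℝ≥0 => X t) (fun t => hX t t.2) fun ω t =>
    (hrc ω t t.2).comp NNReal.continuous_coe.continuousWithinAt fun _ hs => hs

/-- The one-dimensional laws of a process `X`, as a kernel from times to states. Times are indexed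
by `ℝ` to match interval integrals; a negative time is sent to the law at time `0`. If `X` is not
jointly measurable on nonnegative times, this is the zero kernel. -/
noncomputable def marginalLaw (P : Measure Ω) (X : ℝ → Ω → E) : Kernel ℝ E :=
  ((Kernel.id ×ₖ Kernel.const ℝ≥0 P).map fun p => X p.1 p.2).comap Real.toNNReal
    measurable_real_toNNReal

lemma isMarkovKernel_marginalLaw [IsProbabilityMeasure P] {X : ℝ → Ω → E}
    (hX : Measurable fun p : ℝ≥0 × Ω => X p.1 p.2) : IsMarkovKernel (marginalLaw P X) :=
  have := Kernel.IsMarkovKernel.map (Kernel.id ×ₖ Kernel.const ℝ≥0 P) hX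
  Kernel.IsMarkovKernel.comap _ measurable_real_toNNReal

lemma measurable_apply_of_measurable_nnreal {X : ℝ → Ω → E}
    (hX : Measurable fun p : ℝ≥0 × Ω => X p.1 p.2) {t : ℝ} (ht : 0 ≤ t) : Measurable (X t) :=
  hX.comp (measurable_prodMk_left (x := (⟨t, ht⟩ : ℝ≥0)))

lemma marginalLaw_apply [SFinite P] {X : ℝ → Ω → E} (hX : Measurable fun p : ℝ≥0 × Ω => X p.1 p.2)
    {t : ℝ} (ht : 0 ≤ t) : marginalLaw P X t = P.map (X t) := by
  rw [marginalLaw, Kernel.comap_apply, Kernel.map_apply _ hX, Kernel.prod_apply, Kernel.id_apply,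
    Kernel.const_apply, Measure.dirac_prod, Measure.map_map hX measurable_prodMk_left]
  simp only [Function.comp_def, Real.coe_toNNReal t ht]

section MarginalForwardEquation

variable [SFinite P] {X : ℝ → Ω → E} {φ ψ : E → ℝ}

lemma integrable_prod_of_lintegral_lt_top (hX : Measurable fun p : ℝ≥0 × Ω => X p.1 p.2)
    (hφ : Measurable φ) {t : ℝ} (hfin : ∫⁻ s in Icc 0 t, ∫⁻ ω, ‖φ (X s ω)‖ₑ ∂P < ⊤) :
    Integrable (fun q : ℝ × Ω => φ (X q.1 q.2)) ((volume.restrict (Icc 0 t)).prod P) := by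
  have hmeas : Measurable fun q : ℝ × Ω => φ (X q.1.toNNReal q.2) :=
    hφ.comp (hX.comp (f := fun q : ℝ × Ω => (q.1.toNNReal, q.2)) (by fun_prop))
  have hae : (fun q : ℝ × Ω => φ (X q.1.toNNReal q.2)) =ᵐ[(volume.restrict (Icc 0 t)).prod P]
      fun q => φ (X q.1 q.2) := by
    filter_upwards [Measure.quasiMeasurePreserving_fst.ae (ae_restrict_mem measurableSet_Icc)]
      with q hq
    rw [Real.coe_toNNReal _ hq.1]
  refine Integrable.congr ⟨hmeas.aestronglyMeasurable, ?_⟩ hae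
  rw [hasFiniteIntegral_iff_enorm, lintegral_prod _ hmeas.enorm.aemeasurable]
  refine (setLIntegral_congr_fun measurableSet_Icc fun s hs => ?_).trans_lt hfin
  simp only [Real.coe_toNNReal s hs.1]

theorem solvesForwardEquation_marginalLaw (hX : Measurable fun p : ℝ≥0 × Ω => X p.1 p.2)
    (hψ : Measurable ψ) (hφ : Measurable φ)
    (hψint : ∀ t, 0 ≤ t → Integrable (fun ω => ψ (X t ω)) P)
    (hfin : ∀ t, 0 ≤ t → ∫⁻ s in Icc 0 t, ∫⁻ ω, ‖φ (X s ω)‖ₑ ∂P < ⊤)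
    (hdynkin : ∀ t, 0 ≤ t →
      ∫ ω, (ψ (X t ω) - ∫ s in (0 : ℝ)..t, φ (X s ω)) ∂P = ∫ ω, ψ (X 0 ω) ∂P) :
    SolvesForwardEquation (marginalLaw P X) ψ φ where
  lintegral_enorm_lt_top t ht := by
    refine (setLIntegral_congr_fun measurableSet_Icc fun s hs => ?_).trans_lt (hfin t ht)
    rw [marginalLaw_apply hX hs.1,
      lintegral_map hφ.enorm (measurable_apply_of_measurable_nnreal hX hs.1)]
  integral_eq t ht := by
    have hlaw {f : E → ℝ} (hf : Measurable f) {s : ℝ} (hs : 0 ≤ s) :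
        ∫ x, f x ∂marginalLaw P X s = ∫ ω, f (X s ω) ∂P := by
      rw [marginalLaw_apply hX hs, integral_map
        (measurable_apply_of_measurable_nnreal hX hs).aemeasurable hf.aestronglyMeasurable]
    have hprod := integrable_prod_of_lintegral_lt_top hX hφ (hfin t ht)
    have hdrift : ∫ ω, ∫ s in Icc 0 t, φ (X s ω) ∂volume ∂P =
        ∫ s in Icc 0 t, ∫ x, φ x ∂marginalLaw P X s := by
      rw [← integral_integral_swap (f := fun s ω => φ (X s ω)) hprod]
      exact setIntegral_congr_fun measurableSet_Icc fun s hs => (hlaw hφ hs.1).symm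
    have hsub := hdynkin t ht
    simp only [intervalIntegral.integral_of_le ht, ← integral_Icc_eq_integral_Ioc] at hsub ⊢
    rw [integral_sub (hψint t ht) hprod.integral_prod_right, hdrift] at hsub
    rw [hlaw hψ ht, hlaw hψ le_rfl]
    linarith

end MarginalForwardEquation

section Independence

variable [IsProbabilityMeasure P] {X₁ : ℝ → Ω → E₁} {X₂ : ℝ → Ω → E₂}

lemma parallelComp_marginalLaw_apply (hX₁ : Measurable fun p : ℝ≥0 × Ω => X₁ p.1 p.2)
    (hX₂ : Measurable fun p : ℝ≥0 × Ω => X₂ p.1 p.2) {s t : ℝ} (hs : 0 ≤ s) (ht : 0 ≤ t)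
    (hindep : IndepFun (X₁ s) (X₂ t) P) :
    (marginalLaw P X₁ ∥ₖ marginalLaw P X₂) (s, t) = P.map fun ω => (X₁ s ω, X₂ t ω) := by
  have := isMarkovKernel_marginalLaw (P := P) hX₁
  have := isMarkovKernel_marginalLaw (P := P) hX₂
  rw [Kernel.parallelComp_apply, marginalLaw_apply hX₁ hs, marginalLaw_apply hX₂ ht]
  exact (hindep.map_prod_eq_prod_map_map
    (measurable_apply_of_measurable_nnreal hX₁ hs).aemeasurable
    (measurable_apply_of_measurable_nnreal hX₂ ht).aemeasurable).symm

lemma integral_parallelComp_marginalLaw (hX₁ : Measurable fun p : ℝ≥0 × Ω => X₁ p.1 p.2)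
    (hX₂ : Measurable fun p : ℝ≥0 × Ω => X₂ p.1 p.2) {s t : ℝ} (hs : 0 ≤ s) (ht : 0 ≤ t)
    (hindep : IndepFun (X₁ s) (X₂ t) P) {f : E₁ × E₂ → ℝ} (hf : Measurable f) :
    ∫ p, f p ∂(marginalLaw P X₁ ∥ₖ marginalLaw P X₂) (s, t) = ∫ ω, f (X₁ s ω, X₂ t ω) ∂P := by
  rw [parallelComp_marginalLaw_apply hX₁ hX₂ hs ht hindep, integral_map _ hf.aestronglyMeasurable]
  exact ((measurable_apply_of_measurable_nnreal hX₁ hs).prodMk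
    (measurable_apply_of_measurable_nnreal hX₂ ht)).aemeasurable

lemma setLIntegral_parallelComp_marginalLaw (hX₁ : Measurable fun p : ℝ≥0 × Ω => X₁ p.1 p.2)
    (hX₂ : Measurable fun p : ℝ≥0 × Ω => X₂ p.1 p.2)
    (hindep : ∀ s t, 0 ≤ s → 0 ≤ t → IndepFun (X₁ s) (X₂ t) P) {f : E₁ × E₂ → ℝ≥0∞}
    (hf : Measurable f) (T : ℝ) :
    ∫⁻ q in Icc 0 T ×ˢ Icc 0 T, ∫⁻ p, f p ∂(marginalLaw P X₁ ∥ₖ marginalLaw P X₂) q =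
      ∫⁻ s in Icc 0 T, ∫⁻ t in Icc 0 T, ∫⁻ ω, f (X₁ s ω, X₂ t ω) ∂P := by
  rw [Measure.volume_eq_prod, ← Measure.prod_restrict,
    lintegral_prod _ hf.lintegral_kernel.aemeasurable]
  refine setLIntegral_congr_fun measurableSet_Icc fun s hs =>
    setLIntegral_congr_fun measurableSet_Icc fun t ht => ?_
  rw [parallelComp_marginalLaw_apply hX₁ hX₂ hs.1 ht.1 (hindep s t hs.1 ht.1), lintegral_map hf
    ((measurable_apply_of_measurable_nnreal hX₁ hs.1).prodMk
      (measurable_apply_of_measurable_nnreal hX₂ ht.1))]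

end Independence

end MarginalLaw

lemma integral_sub_integral_eq_of_martingale {Ω : Type*} [MeasurableSpace Ω] {P : Measure Ω}
    [IsFiniteMeasure P] {ℱ : Filtration ℝ≥0 ‹MeasurableSpace Ω›} {Y Z : ℝ → Ω → ℝ}
    (h : Martingale (fun (t : ℝ≥0) ω => Y t ω - ∫ s in (0 : ℝ)..t, Z s ω) ℱ P) {t : ℝ}
    (ht : 0 ≤ t) : ∫ ω, (Y t ω - ∫ s in (0 : ℝ)..t, Z s ω) ∂P = ∫ ω, Y 0 ω ∂P := by
  lift t to ℝ≥0 using ht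
  simpa using (h.setIntegral_eq zero_le MeasurableSet.univ).symm

theorem everywhere_inequality_ge_general {Ω E₁ E₂ : Type*} [MeasurableSpace Ω] [MeasurableSpace E₁]
    [MeasurableSpace E₂] (P : Measure Ω) [IsProbabilityMeasure P] {Ψ Φ₁ Φ₂ : E₁ × E₂ → ℝ}
    (hΨ : Measurable Ψ) {C : ℝ} (hΨC : ∀ p, |Ψ p| ≤ C) (hΦ₁ : Measurable Φ₁) (hΦ₂ : Measurable Φ₂)
    {X₁ : ℝ → Ω → E₁} {X₂ : ℝ → Ω → E₂} (hX₁ : Measurable fun p : ℝ≥0 × Ω => X₁ p.1 p.2)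
    (hX₂ : Measurable fun p : ℝ≥0 × Ω => X₂ p.1 p.2)
    (hindep : ∀ s t, 0 ≤ s → 0 ≤ t → IndepFun (X₁ s) (X₂ t) P)
    (hint₁ : ∀ y t, 0 ≤ t → ∫⁻ s in Icc 0 t, ∫⁻ ω, ‖Φ₁ (X₁ s ω, y)‖ₑ ∂P < ⊤)
    (hdynkin₁ : ∀ y t, 0 ≤ t →
      ∫ ω, (Ψ (X₁ t ω, y) - ∫ s in (0 : ℝ)..t, Φ₁ (X₁ s ω, y)) ∂P = ∫ ω, Ψ (X₁ 0 ω, y) ∂P)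
    (hint₂ : ∀ x t, 0 ≤ t → ∫⁻ s in Icc 0 t, ∫⁻ ω, ‖Φ₂ (x, X₂ s ω)‖ₑ ∂P < ⊤)
    (hdynkin₂ : ∀ x t, 0 ≤ t →
      ∫ ω, (Ψ (x, X₂ t ω) - ∫ s in (0 : ℝ)..t, Φ₂ (x, X₂ s ω)) ∂P = ∫ ω, Ψ (x, X₂ 0 ω) ∂P)
    (hfin₁ : ∀ T, 0 ≤ T →
      ∫⁻ s in Icc 0 T, ∫⁻ t in Icc 0 T, ∫⁻ ω, ‖Φ₁ (X₁ s ω, X₂ t ω)‖ₑ ∂P < ⊤)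
    (hfin₂ : ∀ T, 0 ≤ T →
      ∫⁻ s in Icc 0 T, ∫⁻ t in Icc 0 T, ∫⁻ ω, ‖Φ₂ (X₁ s ω, X₂ t ω)‖ₑ ∂P < ⊤)
    (hle : Φ₂ ≤ Φ₁) {T : ℝ} (hT : 0 ≤ T) :
    ∫ ω, Ψ (X₁ 0 ω, X₂ T ω) ∂P ≤ ∫ ω, Ψ (X₁ T ω, X₂ 0 ω) ∂P := by
  have := isMarkovKernel_marginalLaw (P := P) hX₁
  have := isMarkovKernel_marginalLaw (P := P) hX₂
  have hΨint {Z : Ω → E₁ × E₂} (hZ : Measurable Z) : Integrable (fun ω => Ψ (Z ω)) P :=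
    .of_bound (hΨ.comp hZ).aestronglyMeasurable C (.of_forall fun _ => hΨC _)
  have hforward₁ (y : E₂) :
      SolvesForwardEquation (marginalLaw P X₁) (fun x => Ψ (x, y)) (fun x => Φ₁ (x, y)) :=
    solvesForwardEquation_marginalLaw hX₁ (by fun_prop) (by fun_prop)
      (fun t ht => hΨint ((measurable_apply_of_measurable_nnreal hX₁ ht).prodMk measurable_const))
      (hint₁ y) (hdynkin₁ y)
  have hforward₂ (x : E₁) :
      SolvesForwardEquation (marginalLaw P X₂) (fun y => Ψ (x, y)) (fun y => Φ₂ (x, y)) :=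
    solvesForwardEquation_marginalLaw hX₂ (by fun_prop) (by fun_prop)
      (fun t ht => hΨint (measurable_const.prodMk (measurable_apply_of_measurable_nnreal hX₂ ht)))
      (hint₂ x) (hdynkin₂ x)
  rw [← integral_parallelComp_marginalLaw hX₁ hX₂ le_rfl hT (hindep 0 T le_rfl hT) hΨ,
    ← integral_parallelComp_marginalLaw hX₁ hX₂ hT le_rfl (hindep T 0 hT le_rfl) hΨ]
  refine integral_parallelComp_le hΨ hΨC hΦ₁ hΦ₂ hforward₁ hforward₂ ?_ ?_ hle hT
  · simpa only [setLIntegral_parallelComp_marginalLaw hX₁ hX₂ hindep hΦ₁.enorm] using hfin₁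
  · simpa only [setLIntegral_parallelComp_marginalLaw hX₁ hX₂ hindep hΦ₂.enorm] using hfin₂

/-- **Duality with error term** (Athreya–Swart, correction to "Branching-coalescing
particle systems", Corollary: everywhere inequality). -/
theorem everywhere_inequality_ge
    {Ω : Type*} [MeasurableSpace Ω] (P : Measure Ω) [IsProbabilityMeasure P]
    {E₁ E₂ : Type*}
    [TopologicalSpace E₁] [TopologicalSpace.MetrizableSpace E₁]
    [MeasurableSpace E₁] [BorelSpace E₁]
    [TopologicalSpace E₂] [TopologicalSpace.MetrizableSpace E₂]
    [MeasurableSpace E₂] [BorelSpace E₂]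
    (Ψ Φ₁ Φ₂ : E₁ × E₂ → ℝ)
    (hΨm : Measurable Ψ) (C : ℝ) (hΨb : ∀ x, |Ψ x| ≤ C)
    (hΦ₁m : Measurable Φ₁) (hΦ₂m : Measurable Φ₂)
    (X₁ : ℝ → Ω → E₁) (X₂ : ℝ → Ω → E₂)
    (hX₁sm : ∀ t, StronglyMeasurable (X₁ t))
    (hX₂sm : ∀ t, StronglyMeasurable (X₂ t))
    -- càdlàg sample paths on [0,∞)
    (hX₁rc : ∀ ω, ∀ t : ℝ, 0 ≤ t → ContinuousWithinAt (fun s => X₁ s ω) (Ici t) t)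
    (hX₁ll : ∀ ω, ∀ t : ℝ, 0 < t →
      ∃ l, Tendsto (fun s => X₁ s ω) (nhdsWithin t (Iio t)) (nhds l))
    (hX₂rc : ∀ ω, ∀ t : ℝ, 0 ≤ t → ContinuousWithinAt (fun s => X₂ s ω) (Ici t) t)
    (hX₂ll : ∀ ω, ∀ t : ℝ, 0 < t →
      ∃ l, Tendsto (fun s => X₂ s ω) (nhdsWithin t (Iio t)) (nhds l))
    -- X¹ and X² are independent
    (hindep : IndepFun (fun ω t => X₁ t ω) (fun ω t => X₂ t ω) P)
    -- martingale problem for X¹ (with integrability), for every x₂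
    (hΨint₁ : ∀ x₂, ∀ t : ℝ, 0 ≤ t → Integrable (fun ω => Ψ (X₁ t ω, x₂)) P)
    (hΦint₁ : ∀ x₂, ∀ t : ℝ, 0 ≤ t →
      (∫⁻ s in Icc (0 : ℝ) t, ∫⁻ ω, ENNReal.ofReal |Φ₁ (X₁ s ω, x₂)| ∂P) < ⊤)
    (hmart₁ : ∀ x₂, Martingale
      (fun (t : ℝ≥0) ω => Ψ (X₁ t ω, x₂) - ∫ s in (0 : ℝ)..(t : ℝ), Φ₁ (X₁ s ω, x₂))
      (Filtration.natural (fun (t : ℝ≥0) => X₁ t) (fun t => hX₁sm t)) P)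
    -- martingale problem for X² (with integrability), for every x₁
    (hΨint₂ : ∀ x₁, ∀ t : ℝ, 0 ≤ t → Integrable (fun ω => Ψ (x₁, X₂ t ω)) P)
    (hΦint₂ : ∀ x₁, ∀ t : ℝ, 0 ≤ t →
      (∫⁻ s in Icc (0 : ℝ) t, ∫⁻ ω, ENNReal.ofReal |Φ₂ (x₁, X₂ s ω)| ∂P) < ⊤)
    (hmart₂ : ∀ x₁, Martingale
      (fun (t : ℝ≥0) ω => Ψ (x₁, X₂ t ω) - ∫ s in (0 : ℝ)..(t : ℝ), Φ₂ (x₁, X₂ s ω))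
      (Filtration.natural (fun (t : ℝ≥0) => X₂ t) (fun t => hX₂sm t)) P)
    -- double integrability assumption (1.7)
    (hΦΦ₁ : ∀ T : ℝ, 0 ≤ T →
      (∫⁻ s in Icc (0 : ℝ) T, ∫⁻ t in Icc (0 : ℝ) T,
        ∫⁻ ω, ENNReal.ofReal |Φ₁ (X₁ s ω, X₂ t ω)| ∂P) < ⊤)
    (hΦΦ₂ : ∀ T : ℝ, 0 ≤ T →
      (∫⁻ s in Icc (0 : ℝ) T, ∫⁻ t in Icc (0 : ℝ) T,
        ∫⁻ ω, ENNReal.ofReal |Φ₂ (X₁ s ω, X₂ t ω)| ∂P) < ⊤)     (hΦle : ∀ x₁ x₂, Φ₂ (x₁, x₂) ≤ Φ₁ (x₁, x₂)) :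
    ∀ T : ℝ, 0 ≤ T →
      (∫ ω, Ψ (X₁ 0 ω, X₂ T ω) ∂P) ≤ ∫ ω, Ψ (X₁ T ω, X₂ 0 ω) ∂P := by
  simp only [← Real.enorm_eq_ofReal_abs] at hΦint₁ hΦint₂ hΦΦ₁ hΦΦ₂
  exact fun T hT => everywhere_inequality_ge_general P hΨm hΨb hΦ₁m hΦ₂m
    (measurable_nnreal_of_rightContinuous (fun t _ => (hX₁sm t).measurable) hX₁rc)
    (measurable_nnreal_of_rightContinuous (fun t _ => (hX₂sm t).measurable) hX₂rc)
    (fun s t _ _ => hindep.comp (measurable_pi_apply s) (measurable_pi_apply t))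
    hΦint₁ (fun y _ => integral_sub_integral_eq_of_martingale
      (Y := fun t ω => Ψ (X₁ t ω, y)) (hmart₁ y))
    hΦint₂ (fun x _ => integral_sub_integral_eq_of_martingale
      (Y := fun t ω => Ψ (x, X₂ t ω)) (hmart₂ x))
    hΦΦ₁ hΦΦ₂ (fun p => hΦle p.1 p.2) hT
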